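/- Let k ≥ 3 be an integer and let j be an integer with 1 ≤ j ≤ k. For every fixed ε > 0 there is a constant C (depending only on ε and k) such that for all integers q ≥ 1 and all reals N ≥ 1, Σ_{N < n ≤ 2N} w_k(q / gcd(q, n^j)) ≤ C·q^ε·w_k(q)·N. -/

import Mathlib

open scoped BigOperators

/-- The multiplicative function `w_k`, with `w_k(p^{ku+v}) = k p^{-u-1/2}` if `v = 1`
and `w_k(p^{ku+v}) = p^{-u-1}` if `2 ≤ v ≤ k` (where `u ≥ 0`, `1 ≤ v ≤ k`). -/
noncomputable def wk (k : ℕ) (n : ℕ) : ℝ :=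
  ∏ p ∈ n.primeFactors,
    (if (n.factorization p - 1) % k = 0 then
      (k : ℝ) * (p : ℝ) ^ (-(((n.factorization p - 1) / k : ℕ) : ℝ) - 1 / 2)
    else
      (p : ℝ) ^ (-(((n.factorization p - 1) / k : ℕ) : ℝ) - 1))

/-!
Up to a factor between `1` and `k`, `w_k(p^a)` is `p^{-e(a)}` for a monotone `e` that grows by at
most `1` when `a` grows by `k`. Hence `w_k(m) ≤ k^{ω(q)} t w_k(q)` whenever `m ∣ q` and
`q ∣ m t^k`. For `m = q / gcd(q, n^j)` with `j ≤ k` one may take `t = gcd(q, n)`, and the sum of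
`gcd(q, n)` over `n ≤ X` is at most `d(q) X`. Finally `k^{ω(q)} d(q) = O(q^ε)`.
-/

lemma add_one_le_div_mul_pow {x : ℝ} (hx : 1 < x) (a : ℕ) :
    (a + 1 : ℝ) ≤ x / (x - 1) * x ^ a := by
  have bernoulli := one_add_mul_sub_le_pow (by linarith : -1 ≤ x) (a + 1)
  push_cast at bernoulli
  rw [div_mul_eq_mul_div, ← pow_succ', le_div_iff₀ (sub_pos.mpr hx)]
  linarith

lemma mul_add_one_le_two_mul_pow {K : ℝ} (hK : 1 ≤ K) {a : ℕ} (ha : a ≠ 0) :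
    K * (a + 1) ≤ (2 * K) ^ a := by
  have two_pow : (a + 1 : ℝ) ≤ 2 ^ a := by exact_mod_cast Nat.lt_two_pow_self (n := a)
  calc K * (a + 1) ≤ K ^ a * 2 ^ a := by
        gcongr
        exact le_self_pow₀ hK ha
    _ = (2 * K) ^ a := by rw [mul_pow, mul_comm]

lemma rpow_natCast_eq_prod_primeFactors {q : ℕ} (hq : q ≠ 0) (ε : ℝ) :
    (q : ℝ) ^ ε = ∏ p ∈ q.primeFactors, ((p : ℝ) ^ ε) ^ q.factorization p := by
  conv_lhs => rw [Nat.prod_primeFactors_pow_factorization hq]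
  push_cast
  rw [← Real.finsetProd_rpow _ _ fun p _ => by positivity]
  exact Finset.prod_congr rfl fun p _ => (Real.rpow_pow_comm p.cast_nonneg ε _).symm

lemma prod_primeFactors_le_pow_mul_rpow {f : ℕ → ℕ → ℝ} {ε M : ℝ} {P : ℕ} (hM : 1 ≤ M)
    (hf : ∀ p a, 0 ≤ f p a)
    (hsmall : ∀ p a, p.Prime → f p a ≤ M * ((p : ℝ) ^ ε) ^ a)
    (hlarge : ∀ p a, P ≤ p → a ≠ 0 → f p a ≤ ((p : ℝ) ^ ε) ^ a)
    {q : ℕ} (hq : q ≠ 0) :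
    ∏ p ∈ q.primeFactors, f p (q.factorization p) ≤ M ^ P * (q : ℝ) ^ ε := by
  have local_le : ∀ p ∈ q.primeFactors, f p (q.factorization p) ≤
      (if p < P then M else 1) * ((p : ℝ) ^ ε) ^ q.factorization p := by
    intro p hp
    split_ifs with hpP
    · exact hsmall p _ (Nat.prime_of_mem_primeFactors hp)
    · rw [one_mul]
      refine hlarge p _ (not_lt.mp hpP) ?_
      rwa [← Finsupp.mem_support_iff, Nat.support_factorization]
  have small_primes_le : ∏ p ∈ q.primeFactors, (if p < P then M else 1) ≤ M ^ P := by
    rw [← Finset.prod_filter, Finset.prod_const]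
    refine pow_le_pow_right₀ hM ?_
    calc (q.primeFactors.filter (· < P)).card
        ≤ (Finset.range P).card := Finset.card_le_card fun p hp =>
          Finset.mem_range.mpr (Finset.mem_filter.mp hp).2
      _ = P := Finset.card_range P
  calc ∏ p ∈ q.primeFactors, f p (q.factorization p)
      ≤ ∏ p ∈ q.primeFactors, (if p < P then M else 1) * ((p : ℝ) ^ ε) ^ q.factorization p :=
        Finset.prod_le_prod (fun p _ => hf p _) local_le
    _ = (∏ p ∈ q.primeFactors, (if p < P then M else 1)) * (q : ℝ) ^ ε := by
        rw [Finset.prod_mul_distrib, rpow_natCast_eq_prod_primeFactors hq]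
    _ ≤ M ^ P * (q : ℝ) ^ ε := by gcongr

lemma exists_pow_card_primeFactors_mul_card_divisors_le {K ε : ℝ} (hK : 1 ≤ K) (hε : 0 < ε) :
    ∃ C > 0, ∀ q : ℕ, q ≠ 0 →
      K ^ q.primeFactors.card * q.divisors.card ≤ C * (q : ℝ) ^ ε := by
  set x : ℝ := 2 ^ ε
  have hx : 1 < x := Real.one_lt_rpow one_lt_two hε
  set M : ℝ := K * (x / (x - 1))
  have hM : 1 ≤ M := one_le_mul_of_one_le_of_one_le hK <|
    (one_le_div (sub_pos.mpr hx)).mpr (by linarith)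
  have hsmall : ∀ p a : ℕ, p.Prime → K * (a + 1) ≤ M * ((p : ℝ) ^ ε) ^ a := by
    intro p a hp
    have two_le : (2 : ℝ) ≤ p := by exact_mod_cast hp.two_le
    calc K * (a + 1) ≤ K * (x / (x - 1) * x ^ a) := by
          gcongr
          exact add_one_le_div_mul_pow hx a
      _ = M * x ^ a := by rw [← mul_assoc]
      _ ≤ M * ((p : ℝ) ^ ε) ^ a := by
          gcongr
          exact Real.rpow_le_rpow zero_le_two two_le hε.le
  obtain ⟨P, hP⟩ := exists_nat_ge ((2 * K) ^ ε⁻¹)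
  have hlarge : ∀ p a : ℕ, P ≤ p → a ≠ 0 → K * (a + 1) ≤ ((p : ℝ) ^ ε) ^ a := by
    intro p a hp ha
    have two_mul_le : 2 * K ≤ (p : ℝ) ^ ε :=
      (Real.rpow_inv_le_iff_of_pos (by positivity) (by positivity) hε).mp
        (hP.trans (by exact_mod_cast hp))
    exact (mul_add_one_le_two_mul_pow hK ha).trans (by gcongr)
  refine ⟨M ^ P, by positivity, fun q hq => ?_⟩
  calc K ^ q.primeFactors.card * (q.divisors.card : ℝ)
      = ∏ p ∈ q.primeFactors, K * (q.factorization p + 1) := by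
        rw [Nat.card_divisors hq, Finset.prod_mul_distrib, Finset.prod_const]
        push_cast
        rfl
    _ ≤ M ^ P * (q : ℝ) ^ ε :=
        prod_primeFactors_le_pow_mul_rpow (f := fun _ a => K * (a + 1)) hM
          (fun _ a => by positivity) hsmall hlarge hq

lemma sum_Ioc_gcd_le {q : ℕ} (hq : q ≠ 0) (N : ℕ) :
    ∑ n ∈ Finset.Ioc 0 N, q.gcd n ≤ q.divisors.card * N := by
  calc ∑ n ∈ Finset.Ioc 0 N, q.gcd n
      ≤ ∑ n ∈ Finset.Ioc 0 N, ∑ d ∈ q.divisors with d ∣ n, d :=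
        Finset.sum_le_sum fun n _ => Finset.single_le_sum (f := id) (fun _ _ => Nat.zero_le _) <|
          Finset.mem_filter.mpr
            ⟨Nat.mem_divisors.mpr ⟨Nat.gcd_dvd_left q n, hq⟩, Nat.gcd_dvd_right q n⟩
    _ = ∑ d ∈ q.divisors, ∑ n ∈ Finset.Ioc 0 N with d ∣ n, d := by
        simp only [Finset.sum_filter]
        exact Finset.sum_comm
    _ = ∑ d ∈ q.divisors, N / d * d := by
        simp only [Finset.sum_const, Nat.Ioc_filter_dvd_card_eq_div, smul_eq_mul]
    _ ≤ q.divisors.card * N :=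
        Finset.sum_le_card_nsmul _ _ _ fun d _ => Nat.div_mul_le_self N d

lemma dvd_div_gcd_pow_mul_gcd_pow (q n : ℕ) {j k : ℕ} (hjk : j ≤ k) :
    q ∣ q / q.gcd (n ^ j) * q.gcd n ^ k := by
  calc q = q / q.gcd (n ^ j) * q.gcd (n ^ j) :=
        (Nat.div_mul_cancel (Nat.gcd_dvd_left _ _)).symm
    _ ∣ q / q.gcd (n ^ j) * q.gcd n ^ k := mul_dvd_mul_left _ <|
        gcd_pow_right_dvd_pow_gcd.trans (pow_dvd_pow _ hjk)

lemma prod_pow_factorization_le {t : ℕ} (ht : t ≠ 0) (s : Finset ℕ) :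
    ∏ p ∈ s, p ^ t.factorization p ≤ t := by
  calc ∏ p ∈ s, p ^ t.factorization p
      = ∏ p ∈ s with p ∈ t.primeFactors, p ^ t.factorization p := by
        refine (Finset.prod_filter_of_ne fun p _ hp => ?_).symm
        rw [← Nat.support_factorization, Finsupp.mem_support_iff]
        exact fun h => hp (by rw [h, pow_zero])
    _ ≤ ∏ p ∈ t.primeFactors, p ^ t.factorization p :=
        Finset.prod_le_prod_of_subset_of_one_le'
          (fun p hp => (Finset.mem_filter.mp hp).2)
          fun p hp _ => Nat.one_le_pow _ _ (Nat.pos_of_mem_primeFactors hp)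
    _ = t := (Nat.prod_primeFactors_pow_factorization ht).symm

section Weight

variable {k : ℕ}

/-- The exponent `e` for which `w_k(p^a)` is `p^{-e}` up to a factor `k`: it is `0` for `a = 0`,
and for `a = ku + v` it is `u + 1/2` if `v = 1` and `u + 1` if `2 ≤ v ≤ k`. It is encoded as half
of `⌈a/k⌉ + ⌈(a-1)/k⌉`, where truncated subtraction gives the right value at `a = 0`. -/
noncomputable def wkExponent (k a : ℕ) : ℝ := ((a ⌈/⌉ k : ℕ) + ((a - 1) ⌈/⌉ k : ℕ)) / 2

lemma wkExponent_zero (k : ℕ) : wkExponent k 0 = 0 := by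
  simp [wkExponent]

lemma wkExponent_succ (hk : k ≠ 0) (a : ℕ) :
    wkExponent k (a + 1) = (a / k : ℕ) + if a % k = 0 then 1 / 2 else 1 := by
  have succ_ceilDiv (b : ℕ) : (b + 1) ⌈/⌉ k = b / k + 1 := by
    rw [Nat.ceilDiv_eq_add_pred_div, add_right_comm, Nat.add_sub_cancel,
      Nat.add_div_right b (Nat.pos_of_ne_zero hk)]
  rw [wkExponent, Nat.add_sub_cancel, succ_ceilDiv]
  rcases a with _ | b
  · simp
  · rw [succ_ceilDiv, Nat.succ_div]
    simp only [Nat.dvd_iff_mod_eq_zero]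
    split_ifs <;> push_cast <;> ring

lemma wkExponent_le_add (hk : k ≠ 0) {a b t : ℕ} (h : a ≤ b + k * t) :
    wkExponent k a ≤ wkExponent k b + t := by
  have ceilDiv_le {c d : ℕ} (hcd : c ≤ d + k * t) : c ⌈/⌉ k ≤ d ⌈/⌉ k + t := by
    have hk' := Nat.pos_of_ne_zero hk
    rw [ceilDiv_le_iff_le_mul hk', mul_add]
    exact hcd.trans (Nat.add_le_add_right (le_smul_ceilDiv hk') _)
  have le_ceilDiv : ((a ⌈/⌉ k : ℕ) : ℝ) ≤ (b ⌈/⌉ k : ℕ) + t := by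
    exact_mod_cast ceilDiv_le h
  have le_pred_ceilDiv : (((a - 1) ⌈/⌉ k : ℕ) : ℝ) ≤ ((b - 1) ⌈/⌉ k : ℕ) + t := by
    exact_mod_cast ceilDiv_le (by lia)
  unfold wkExponent
  linarith

lemma wk_nonneg (k n : ℕ) : 0 ≤ wk k n :=
  Finset.prod_nonneg fun p _ => by split_ifs <;> positivity

lemma wk_one (k : ℕ) : wk k 1 = 1 := by
  simp [wk]

lemma wk_prime_pow {p : ℕ} (hp : p.Prime) {a : ℕ} (ha : a ≠ 0) :
    wk k (p ^ a) =
      if (a - 1) % k = 0 then k * (p : ℝ) ^ (-((a - 1) / k : ℕ) - 1 / 2 : ℝ)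
      else (p : ℝ) ^ (-((a - 1) / k : ℕ) - 1 : ℝ) := by
  rw [wk, Nat.primeFactors_prime_pow ha hp, Finset.prod_singleton, hp.factorization_pow,
    Finsupp.single_eq_same]

lemma wk_eq_prod_prime_pow {n : ℕ} {s : Finset ℕ} (hs : n.primeFactors ⊆ s) :
    wk k n = ∏ p ∈ s, wk k (p ^ n.factorization p) := by
  rw [← Finset.prod_subset hs]
  · refine Finset.prod_congr rfl fun p hp =>
      (wk_prime_pow (Nat.prime_of_mem_primeFactors hp) ?_).symm
    rwa [← Finsupp.mem_support_iff, Nat.support_factorization]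
  · intro p _ hp
    rw [← Nat.support_factorization, Finsupp.notMem_support_iff] at hp
    rw [hp, pow_zero, wk_one]

lemma exists_wk_prime_pow_eq_mul_rpow (hk : k ≠ 0) {p : ℕ} (hp : p.Prime) (a : ℕ) :
    ∃ c ∈ Set.Icc (1 : ℝ) k, wk k (p ^ a) = c * (p : ℝ) ^ (-wkExponent k a) := by
  have one_le_k : (1 : ℝ) ≤ k := by exact_mod_cast Nat.one_le_iff_ne_zero.mpr hk
  rcases a with _ | a
  · exact ⟨1, ⟨le_rfl, one_le_k⟩, by simp [wk_one, wkExponent_zero]⟩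
  rw [wk_prime_pow hp (Nat.add_one_ne_zero a), wkExponent_succ hk, Nat.add_sub_cancel]
  split_ifs
  · exact ⟨k, ⟨one_le_k, le_rfl⟩, by rw [neg_add']⟩
  · exact ⟨1, ⟨le_rfl, one_le_k⟩, by rw [neg_add', one_mul]⟩

lemma wk_prime_pow_le (hk : k ≠ 0) {p : ℕ} (hp : p.Prime) {a b t : ℕ} (h : a ≤ b + k * t) :
    wk k (p ^ b) ≤ k * (p : ℝ) ^ t * wk k (p ^ a) := by
  obtain ⟨c, ⟨one_le_c, -⟩, wk_a⟩ := exists_wk_prime_pow_eq_mul_rpow hk hp a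
  obtain ⟨d, ⟨-, d_le⟩, wk_b⟩ := exists_wk_prime_pow_eq_mul_rpow hk hp b
  have hp₀ : (0 : ℝ) < p := by exact_mod_cast hp.pos
  have one_le_p : (1 : ℝ) ≤ p := by exact_mod_cast hp.one_le
  calc wk k (p ^ b) = d * (p : ℝ) ^ (-wkExponent k b) := wk_b
    _ ≤ k * (p : ℝ) ^ (t + -wkExponent k a) := by
        gcongr
        linarith [wkExponent_le_add hk h]
    _ = k * (p : ℝ) ^ t * (1 * (p : ℝ) ^ (-wkExponent k a)) := by
        rw [Real.rpow_add hp₀, Real.rpow_natCast, one_mul, mul_assoc]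
    _ ≤ k * (p : ℝ) ^ t * (c * (p : ℝ) ^ (-wkExponent k a)) := by gcongr
    _ = k * (p : ℝ) ^ t * wk k (p ^ a) := by rw [wk_a]

lemma wk_le_mul_wk_of_dvd_mul_pow (hk : k ≠ 0) {m q t : ℕ} (hq : q ≠ 0) (ht : t ≠ 0)
    (hmq : m ∣ q) (hqm : q ∣ m * t ^ k) :
    wk k m ≤ k ^ q.primeFactors.card * t * wk k q := by
  have hm : m ≠ 0 := ne_zero_of_dvd_ne_zero hq hmq
  have factorization_le (p : ℕ) :
      q.factorization p ≤ m.factorization p + k * t.factorization p := by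
    have h := (Nat.factorization_le_iff_dvd hq (mul_ne_zero hm (pow_ne_zero k ht))).mpr hqm p
    rwa [Nat.factorization_mul hm (pow_ne_zero k ht), Nat.factorization_pow] at h
  calc wk k m = ∏ p ∈ q.primeFactors, wk k (p ^ m.factorization p) :=
        wk_eq_prod_prime_pow (Nat.primeFactors_mono hmq hq)
    _ ≤ ∏ p ∈ q.primeFactors,
          k * (p : ℝ) ^ t.factorization p * wk k (p ^ q.factorization p) :=
        Finset.prod_le_prod (fun p _ => wk_nonneg k _) fun p hp =>
          wk_prime_pow_le hk (Nat.prime_of_mem_primeFactors hp) (factorization_le p)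
    _ = k ^ q.primeFactors.card * (∏ p ∈ q.primeFactors, p ^ t.factorization p : ℕ) * wk k q := by
        rw [Finset.prod_mul_distrib, Finset.prod_mul_distrib, Finset.prod_const,
          ← wk_eq_prod_prime_pow subset_rfl]
        push_cast
        rfl
    _ ≤ k ^ q.primeFactors.card * t * wk k q := by
        gcongr
        · exact wk_nonneg k q
        · exact prod_pow_factorization_le ht _

lemma wk_div_gcd_pow_le (hk : k ≠ 0) {j q : ℕ} (hjk : j ≤ k) (hq : q ≠ 0) (n : ℕ) :
    wk k (q / q.gcd (n ^ j)) ≤ k ^ q.primeFactors.card * q.gcd n * wk k q :=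
  wk_le_mul_wk_of_dvd_mul_pow hk hq (Nat.gcd_ne_zero_left hq)
    (Nat.div_dvd_of_dvd (Nat.gcd_dvd_left _ _)) (dvd_div_gcd_pow_mul_gcd_pow q n hjk)

end Weight

theorem wk_gcd_power_sum_general {k : ℕ} (hk : k ≠ 0) {ε : ℝ} (hε : 0 < ε) :
    ∃ C > 0, ∀ j ≤ k, ∀ q : ℕ, q ≠ 0 → ∀ (M : ℕ) (X : ℝ), 0 ≤ X →
      ∑ n ∈ Finset.Ioc M ⌊X⌋₊, wk k (q / q.gcd (n ^ j)) ≤ C * (q : ℝ) ^ ε * wk k q * X := by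
  have one_le_k : (1 : ℝ) ≤ k := by exact_mod_cast Nat.one_le_iff_ne_zero.mpr hk
  obtain ⟨C, hC, card_le⟩ := exists_pow_card_primeFactors_mul_card_divisors_le one_le_k hε
  refine ⟨C, hC, fun j hjk q hq M X hX => ?_⟩
  have wk_q_nonneg := wk_nonneg k q
  have sum_gcd_le : ∑ n ∈ Finset.Ioc 0 ⌊X⌋₊, (q.gcd n : ℝ) ≤ q.divisors.card * X :=
    calc ∑ n ∈ Finset.Ioc 0 ⌊X⌋₊, (q.gcd n : ℝ) ≤ q.divisors.card * ⌊X⌋₊ := by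
          exact_mod_cast sum_Ioc_gcd_le hq ⌊X⌋₊
      _ ≤ q.divisors.card * X := by gcongr; exact Nat.floor_le hX
  calc ∑ n ∈ Finset.Ioc M ⌊X⌋₊, wk k (q / q.gcd (n ^ j))
      ≤ ∑ n ∈ Finset.Ioc 0 ⌊X⌋₊, wk k (q / q.gcd (n ^ j)) :=
        Finset.sum_le_sum_of_subset_of_nonneg (Finset.Ioc_subset_Ioc_left M.zero_le)
          fun n _ _ => wk_nonneg k _
    _ ≤ ∑ n ∈ Finset.Ioc 0 ⌊X⌋₊, (k : ℝ) ^ q.primeFactors.card * q.gcd n * wk k q :=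
        Finset.sum_le_sum fun n _ => wk_div_gcd_pow_le hk hjk hq n
    _ = k ^ q.primeFactors.card * (∑ n ∈ Finset.Ioc 0 ⌊X⌋₊, (q.gcd n : ℝ)) * wk k q := by
        rw [Finset.mul_sum, Finset.sum_mul]
    _ ≤ k ^ q.primeFactors.card * (q.divisors.card * X) * wk k q := by gcongr
    _ = (k ^ q.primeFactors.card * q.divisors.card) * (wk k q * X) := by ring
    _ ≤ C * (q : ℝ) ^ ε * (wk k q * X) := by
        exact mul_le_mul_of_nonneg_right (card_le q hq) (by positivity)
    _ = C * (q : ℝ) ^ ε * wk k q * X := by ring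

theorem wk_gcd_power_sum (k j : ℕ) (hk : 3 ≤ k) (hj1 : 1 ≤ j) (hjk : j ≤ k)
    (ε : ℝ) (hε : 0 < ε) :
    ∃ C > 0, ∀ q : ℕ, 1 ≤ q → ∀ N : ℝ, 1 ≤ N →
      ∑ n ∈ Finset.Ioc ⌊N⌋₊ ⌊2 * N⌋₊, wk k (q / Nat.gcd q (n ^ j)) ≤
        C * (q : ℝ) ^ ε * wk k q * N := by
  obtain ⟨C, hC, h⟩ := wk_gcd_power_sum_general (k := k) (by lia) hε
  exact ⟨2 * C, by positivity, fun q hq N hN =>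
    (h j hjk q (by lia) ⌊N⌋₊ (2 * N) (by linarith)).trans_eq (by ring)⟩
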